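/- Let t(x,y) = (ȳ, x·ȳ) and let s(x,y) = (y,x) be the swap on 𝕆 × 𝕆. For all x, y ∈ 𝕆 with ‖x‖ = ‖y‖ = 1, one has s(t(s(x,y))) = t(t(x,y)); that is, conjugating t by the swap gives t⁻¹ = t² on S⁷ × S⁷, so s and t generate an action of the symmetric group S₃. -/

import Mathlib

noncomputable section

/-- The octonions as the Cayley–Dickson double of the quaternions. -/
abbrev Oct : Type := Quaternion ℝ × Quaternion ℝ

namespace Oct

/-- Cayley–Dickson multiplication: (a,b)·(c,d) = (ac − d̄b, da + bc̄). -/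
def mul (x y : Oct) : Oct :=
  (x.1 * y.1 - star y.2 * x.2, y.2 * x.1 + x.2 * star y.1)

/-- The unit 1 = (1,0). -/
def one : Oct := (1, 0)

/-- Octonionic conjugation κ(a,b) = (ā, −b). -/
def conj (x : Oct) : Oct := (star x.1, -x.2)

/-- The squared Euclidean norm ‖(a,b)‖² = ‖a‖² + ‖b‖². -/
def normSq (x : Oct) : ℝ := ‖x.1‖ ^ 2 + ‖x.2‖ ^ 2

/-- Left multiplication L(s) : y ↦ s·y. -/
def L (s : Oct) : Oct → Oct := fun y => mul s y

/-- A linear automorphism of 𝕆 is an isometry if it preserves the Euclidean norm. -/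
def IsIsometry (A : Oct ≃ₗ[ℝ] Oct) : Prop := ∀ x, normSq (A x) = normSq x

/-- A triality triple: ℝ-linear isometric bijections with B(x·y) = (Cx)·(Ay). -/
def IsTriality (A B C : Oct ≃ₗ[ℝ] Oct) : Prop :=
  IsIsometry A ∧ IsIsometry B ∧ IsIsometry C ∧
    ∀ x y : Oct, B (mul x y) = mul (C x) (A y)

/-- Octonionic conjugation κ as an ℝ-linear equivalence. -/
def kappa : Oct ≃ₗ[ℝ] Oct where
  toFun := conj
  invFun := conj
  left_inv := fun x => by simp [conj]
  right_inv := fun x => by simp [conj]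
  map_add' := fun x y => by simp [conj, Prod.ext_iff, star_add, neg_add, add_comm]
  map_smul' := fun r x => by simp [conj, Prod.ext_iff]

/-- D ↦ κ∘D∘κ. -/
def conjOp (D : Oct ≃ₗ[ℝ] Oct) : Oct ≃ₗ[ℝ] Oct := kappa.trans (D.trans kappa)

/-- Triples of ℝ-linear bijections of 𝕆. -/
abbrev Triple := (Oct ≃ₗ[ℝ] Oct) × (Oct ≃ₗ[ℝ] Oct) × (Oct ≃ₗ[ℝ] Oct)

/-- The triality map τ(A,B,C) = (κBκ, κCκ, A). -/
def tauMap (T : Triple) : Triple := (conjOp T.2.1, conjOp T.2.2, T.1)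

/-- The outer involution σ(A,B,C) = (B, A, κCκ). -/
def sigmaMap (T : Triple) : Triple := (T.2.1, T.1, conjOp T.2.2)

/-- The induced map on S⁷ × S⁷: t(x,y) = (ȳ, x·ȳ). -/
def tS (p : Oct × Oct) : Oct × Oct := (conj p.2, mul p.1 (conj p.2))

/-- The swap s(x,y) = (y,x). -/
def swap (p : Oct × Oct) : Oct × Oct := (p.2, p.1)

end Oct

open Oct

namespace Oct

lemma conj_conj (x : Oct) : conj (conj x) = x := by
  simp [conj]

lemma conj_mul (x y : Oct) : conj (mul x y) = mul (conj y) (conj x) := by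
  simp [conj, mul, sub_eq_add_neg, add_comm]

lemma coe_normSq (x : Oct) :
    (normSq x : Quaternion ℝ) = star x.1 * x.1 + star x.2 * x.2 := by
  simp only [normSq, Quaternion.star_mul_self, Quaternion.normSq_eq_norm_mul_self, ← pow_two,
    Quaternion.coe_add]

-- `𝕆` is not associative, but `ℍ` is: the mixed terms cancel and the remaining norms are central.
lemma conj_mul_mul_self_left (y z : Oct) : mul (conj y) (mul y z) = normSq y • z := by
  apply Prod.ext
  · calc
      star y.1 * (y.1 * z.1 - star z.2 * y.2) - star (z.2 * y.1 + y.2 * star z.1) * -y.2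
        = star y.1 * y.1 * z.1 + z.1 * (star y.2 * y.2) := by
          simp only [star_add, star_mul, star_star]
          noncomm_ring
      _ = (normSq y : Quaternion ℝ) * z.1 := by
          rw [coe_normSq, Quaternion.star_mul_self y.2, ← Quaternion.coe_commutes, add_mul]
      _ = normSq y • z.1 := Quaternion.coe_mul_eq_smul _ _
  · calc
      (z.2 * y.1 + y.2 * star z.1) * star y.1 + -y.2 * star (y.1 * z.1 - star z.2 * y.2)
        = z.2 * (y.1 * star y.1) + y.2 * star y.2 * z.2 := by
          simp only [star_sub, star_mul, star_star]
          noncomm_ring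
      _ = (normSq y : Quaternion ℝ) * z.2 := by
          rw [coe_normSq, Quaternion.self_mul_star y.1, ← Quaternion.coe_commutes,
            ← Quaternion.star_mul_self y.1, ← star_comm_self' y.2, add_mul]
      _ = normSq y • z.2 := Quaternion.coe_mul_eq_smul _ _

lemma swap_tS_swap (x y : Oct) : swap (tS (swap (x, y))) = (mul y (conj x), conj x) :=
  rfl

lemma tS_tS (x y : Oct) : tS (tS (x, y)) = (mul y (conj x), normSq y • conj x) := by
  simp only [tS, conj_mul, conj_conj, conj_mul_mul_self_left]

end Oct

theorem swap_t_swap_eq_t_sq_general (x y : Oct) (hy : normSq y = 1) :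
    swap (tS (swap (x, y))) = tS (tS (x, y)) := by
  rw [swap_tS_swap, tS_tS, hy, one_smul]

/-- conjugating t by the swap gives t² on S⁷ × S⁷:
s(t(s(x,y))) = t(t(x,y)) for unit x, y; so s and t generate an S₃-action. -/
theorem swap_t_swap_eq_t_sq (x y : Oct) (hx : normSq x = 1) (hy : normSq y = 1) :
    swap (tS (swap (x, y))) = tS (tS (x, y)) :=
  swap_t_swap_eq_t_sq_general x y hy
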